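/- arXiv:nlin/0112043 — 2 statements merged into one kernel-verified Lean document; each statement's English description precedes it below -/
import Mathlib

section
/- For all integers n ≥ 1, the derivative of a_{n+1} satisfies a_{n+1}'(x) = 2n·a_{n-1}(x). -/
/-!
Write `a n` for `painleveA n` and `D` for the derivative. In the shifted form
`D (a (n + 2)) = 2 (n + 1) a n` the claim follows by strong induction on `n`. Differentiating the
recurrence gives `D (a (n + 2)) = D (D (a (n + 1))) + 2 ∑_{i + j = n} a i * D (a j)`. For
`n = m + 2` the induction hypothesis turns this into
`2 (m + 2) D (a (m + 1)) + 2 a (m + 2) + 2 ∑_{i + j = m} 2 (j + 1) a i * a j`, where the middle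
term comes from `D (a 0) = 1`, and `D (a 1) = 0`. Symmetry in `i, j` replaces the weight
`2 (j + 1)` by `m + 2` (`weighted_sum_antidiagonal`), so the recurrence for `a (m + 2)` collects
the first and last terms into `2 (m + 2) a (m + 2)`.
-/

open Polynomial Finset

/-- The polynomials `a_n` from the Hankel determinant representation of the
rational solutions of Painlevé II: `a₀ = x`, `a₁ = 1`,
`a_{n+1} = a_n' + ∑_{k=0}^{n-1} a_k a_{n-1-k}`. -/
noncomputable def painleveA : ℕ → ℝ[X]
  | 0 => X
  | 1 => 1
  | n + 2 => derivative (painleveA (n + 1)) +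
      ∑ k ∈ (Finset.range (n + 1)).attach, painleveA k * painleveA (n - k)
  decreasing_by
  · omega
  · have := Finset.mem_range.mp k.2; omega
  · omega

theorem painleveA_zero : painleveA 0 = X := by
  rw [painleveA]

theorem painleveA_one : painleveA 1 = 1 := by
  rw [painleveA]

theorem painleveA_add_two (n : ℕ) :
    painleveA (n + 2) = derivative (painleveA (n + 1)) +
      ∑ p ∈ antidiagonal n, painleveA p.1 * painleveA p.2 := by
  rw [painleveA, Finset.sum_attach (Finset.range (n + 1))
    (fun k => painleveA k * painleveA (n - k)),
    Finset.Nat.sum_antidiagonal_eq_sum_range_succ (fun i j => painleveA i * painleveA j)]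

theorem sum_antidiagonal_flip {R : Type*} [AddCommMonoid R] (n : ℕ) (f : ℕ → ℕ → R) :
    ∑ p ∈ antidiagonal n, f p.1 p.2 = ∑ p ∈ antidiagonal n, f p.2 p.1 :=
  (Finset.Nat.sum_antidiagonal_swap (n := n) (f := fun p => f p.1 p.2)).symm

/-- The weights `2 (j + 1)` and `2 (i + 1)` give the same sum and average to `i + j + 2`. -/
theorem weighted_sum_antidiagonal (a : ℕ → ℝ[X]) (m : ℕ) :
    2 * ∑ p ∈ antidiagonal m, a p.1 * (2 * ((p.2 : ℝ[X]) + 1) * a p.2) =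
      2 * ((m : ℝ[X]) + 2) * ∑ p ∈ antidiagonal m, a p.1 * a p.2 := by
  rw [two_mul]
  nth_rewrite 2 [sum_antidiagonal_flip m (fun i j => a i * (2 * ((j : ℝ[X]) + 1) * a j))]
  rw [← Finset.sum_add_distrib, Finset.mul_sum]
  refine Finset.sum_congr rfl fun p hp => ?_
  have h : (m : ℝ[X]) = p.1 + p.2 := by
    rw [← Finset.HasAntidiagonal.mem_antidiagonal.mp hp, Nat.cast_add]
  rw [h]
  ring

theorem derivative_painleveA_add_two_eq (n : ℕ) :
    derivative (painleveA (n + 2)) = derivative (derivative (painleveA (n + 1))) +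
      2 * ∑ p ∈ antidiagonal n, painleveA p.1 * derivative (painleveA p.2) := by
  rw [painleveA_add_two, derivative_add, derivative_sum]
  simp only [derivative_mul]
  rw [Finset.sum_add_distrib,
    sum_antidiagonal_flip n (fun i j => derivative (painleveA i) * painleveA j), two_mul]
  simp only [mul_comm (derivative _) (painleveA _)]

theorem derivative_painleveA_add_two (n : ℕ) :
    derivative (painleveA (n + 2)) = 2 * ((n : ℝ[X]) + 1) * painleveA n := by
  induction n using Nat.strong_induction_on with
  | _ n ih =>
    match n, ih with
    | 0, _ =>
      rw [derivative_painleveA_add_two_eq]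
      simp [painleveA_zero, painleveA_one]
    | 1, ih =>
      have h0 := ih 0 one_pos
      rw [derivative_painleveA_add_two_eq, h0]
      simp [Finset.Nat.sum_antidiagonal_succ', painleveA_zero, painleveA_one]
      norm_num
    | m + 2, ih =>
      have h1 : derivative (painleveA (m + 3)) = 2 * ((m : ℝ[X]) + 2) * painleveA (m + 1) := by
        rw [ih (m + 1) (by omega)]
        push_cast
        ring
      have h2 : derivative (derivative (painleveA (m + 3))) =
          2 * ((m : ℝ[X]) + 2) * derivative (painleveA (m + 1)) := by
        rw [h1]
        simp [derivative_mul]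
      have h3 : ∑ p ∈ antidiagonal m, painleveA p.1 * derivative (painleveA (p.2 + 2)) =
          ∑ p ∈ antidiagonal m, painleveA p.1 * (2 * ((p.2 : ℝ[X]) + 1) * painleveA p.2) := by
        refine Finset.sum_congr rfl fun p hp => ?_
        have := Finset.HasAntidiagonal.mem_antidiagonal.mp hp
        rw [ih p.2 (by omega)]
      have h4 : ∑ p ∈ antidiagonal (m + 2), painleveA p.1 * derivative (painleveA p.2) =
          painleveA (m + 2) +
          ∑ p ∈ antidiagonal m, painleveA p.1 * (2 * ((p.2 : ℝ[X]) + 1) * painleveA p.2) := by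
        rw [Finset.Nat.sum_antidiagonal_succ', Finset.Nat.sum_antidiagonal_succ', ← h3]
        simp [painleveA_zero, painleveA_one]
      rw [derivative_painleveA_add_two_eq, h2, h4]
      have h5 := painleveA_add_two m
      have h6 := weighted_sum_antidiagonal painleveA m
      push_cast
      linear_combination (-2 * ((m : ℝ[X]) + 2)) * h5 + h6

/-- For all integers `n ≥ 1`, `a_{n+1}'(x) = 2n·a_{n-1}(x)`. -/
theorem painleveA_derivative (n : ℕ) (hn : 1 ≤ n) :
    derivative (painleveA (n + 1)) = 2 * (n : ℝ[X]) * painleveA (n - 1) := by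
  obtain ⟨m, rfl⟩ := Nat.exists_eq_add_of_le' hn
  simpa using derivative_painleveA_add_two m
end

section
/- Fix x ∈ ℝ and a nonnegative integer N. Then, as t → +∞ along the real axis, one has Ai(t² − x) ≠ 0 for all sufficiently large t, and the logarithmic derivative d/dt log(exp(2t³/3)·Ai(t² − x)) = 2t² + 2t·Ai'(t² − x)/Ai(t² − x) satisfies the asymptotic estimate 2t² + 2t·Ai'(t² − x)/Ai(t² − x) − Σ_{n=0}^{N} a_n(x)·(−2t)^{-n} = O(t^{-(N+1)}) as t → +∞. In other words, the function ∂/∂t log θ(x,t), where θ(x,t) = exp(2t³/3)·Ai(t² − x), admits the asymptotic expansion Σ_{n=0}^{∞} a_n(x)·(−2t)^{-n} as t → +∞. -/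
/-!
The proof rests on the fact that, for fixed `t`, both the logarithmic derivative
`u(x) = ∂/∂t log θ(x, t)` and the formal series `A = ∑ a_n(x) yⁿ` with `y = (-2t)⁻¹` satisfy the
Riccati equation `A = x + y ∂A/∂x + y² A²`. For the series this is the recurrence
(`X_pow_dvd_residual`), so the partial sum `S` satisfies it up to `O(t^(-N-1))`, uniformly for
`x` in a compact interval. For `u` it is Airy's equation.

To reach Airy's equation from the conditionally convergent integral, the contour is shifted to
height `t` (`airy_eq`), which gives
`π Ai(t² - x) = exp(-2t³/3 + x t) G(x)` with `G(x) = ∫₀^∞ exp(-t s²) cos(s³/3 - x s) ds`.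
Differentiation under the integral sign and one integration by parts give
`G'' + 2t G' + x G = 0`, and `u = -2t G'/G`. Estimating the integrals directly, `G` is positive and
`|u| ≤ t²` for large `t`, uniformly for bounded `x` (`airyU_bound`).

The difference `w = u - S` solves a linear equation
`w' = -2t (w (1 - (u + S)/(4t²)) + O(t^(-N-1)))`, strongly damped as `x` increases. Integrating it
from `x - 1` to `x` shrinks the initial value, which is polynomially bounded in `t`, by a factor
exponential in `t`, and leaves `w(x) = O(t^(-N-1))` (`sq_le_of_damped`).
-/

open Polynomial Finset

/-! ### The Riccati equation for the generating function -/

/-- The recurrence in uniform form: it also holds for `n = 0`, where it reads `a₁ = a₀' = 1`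
with an empty sum. -/
theorem painleveA_succ (n : ℕ) :
    painleveA (n + 1) = derivative (painleveA n) +
      ∑ k ∈ range n, painleveA k * painleveA (n - 1 - k) := by
  cases n with
  | zero => simp [painleveA]
  | succ n =>
    rw [painleveA, Finset.sum_attach (range (n + 1)) fun k => painleveA k * painleveA (n - k)]
    simp

/-- The truncated generating function `∑_{n ≤ N} a_n Y^n`, as a polynomial in `Y` over `ℝ[X]`.
In `ℝ[X][X]` the inner variable is the argument of the `a_n` and the outer one is `Y`. -/
noncomputable def truncA (N : ℕ) : ℝ[X][X] :=
  ∑ n ∈ range (N + 1), C (painleveA n) * X ^ n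

/-- The derivative of `truncA N` in the inner variable. -/
noncomputable def truncA' (N : ℕ) : ℝ[X][X] :=
  ∑ n ∈ range (N + 1), C (derivative (painleveA n)) * X ^ n

theorem coeff_truncA {N d : ℕ} (h : d ≤ N) : (truncA N).coeff d = painleveA d := by
  simp [truncA, coeff_X_pow, Nat.lt_succ_of_le h]

theorem coeff_truncA' {N d : ℕ} (h : d ≤ N) :
    (truncA' N).coeff d = derivative (painleveA d) := by
  simp [truncA', coeff_X_pow, Nat.lt_succ_of_le h]

/-- The recurrence says that the full generating function `A = ∑ a_n Y^n` satisfies the Riccati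
equation `A = x + Y A' + Y² A²`; hence its truncation satisfies it modulo `Y^(N+1)`. -/
theorem X_pow_dvd_residual (N : ℕ) :
    (X : ℝ[X][X]) ^ (N + 1) ∣
      truncA N - C X - X * truncA' N - X ^ 2 * (truncA N * truncA N) := by
  rw [X_pow_dvd_iff]
  intro d hd
  rcases d with _ | _ | d
  · simp [coeff_truncA, painleveA]
  · have h1 : (X ^ 2 * (truncA N * truncA N)).coeff 1 = 0 := by
      rw [coeff_X_pow_mul']; simp
    simp [coeff_sub, coeff_X_mul, h1, coeff_truncA (show 1 ≤ N by omega),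
      coeff_truncA' (Nat.zero_le N), painleveA]
  · have h1 : (truncA N * truncA N).coeff d
        = ∑ k ∈ range (d + 1), painleveA k * painleveA (d - k) := by
      rw [coeff_mul, Finset.Nat.sum_antidiagonal_eq_sum_range_succ_mk]
      refine Finset.sum_congr rfl fun k hk => ?_
      have := Finset.mem_range.mp hk
      rw [coeff_truncA (by omega), coeff_truncA (by omega)]
    have h2 : (X ^ 2 * (truncA N * truncA N)).coeff (d + 1 + 1)
        = (truncA N * truncA N).coeff d := by
      rw [show d + 1 + 1 = d + 2 by rfl, coeff_X_pow_mul]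
    rw [coeff_sub, coeff_sub, coeff_sub, h2, h1, coeff_X_mul, coeff_truncA (by omega),
      coeff_truncA' (by omega), painleveA_succ, coeff_C]
    simp

/-- The partial sum `∑_{n ≤ N} a_n(x) y^n`; the expansion is its value at `y = (-2t)⁻¹`. -/
noncomputable def partialSum (N : ℕ) (y x : ℝ) : ℝ :=
  ∑ n ∈ range (N + 1), (painleveA n).eval x * y ^ n

/-- The derivative of `partialSum N y` in `x`. -/
noncomputable def partialSum' (N : ℕ) (y x : ℝ) : ℝ :=
  ∑ n ∈ range (N + 1), (derivative (painleveA n)).eval x * y ^ n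

theorem hasDerivAt_partialSum (N : ℕ) (y x : ℝ) :
    HasDerivAt (partialSum N y) (partialSum' N y x) x :=
  HasDerivAt.fun_sum fun n _ => ((painleveA n).hasDerivAt x).mul_const (y ^ n)

theorem continuous_evalEval (Q : ℝ[X][X]) : Continuous fun p : ℝ × ℝ => Q.evalEval p.1 p.2 := by
  have : (fun p : ℝ × ℝ => Q.evalEval p.1 p.2)
      = fun p => ∑ i ∈ range (Q.natDegree + 1), (Q.coeff i).eval p.1 * p.2 ^ i := by
    funext p
    simp [evalEval, eval_eq_sum_range (p := Q), eval_finsetSum]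
  rw [this]
  refine continuous_finsetSum _ fun i _ => ?_
  exact ((Q.coeff i).continuous.comp continuous_fst).mul (continuous_snd.pow i)

/-- Uniformly on a compact `x`-interval and for `|y| ≤ 1`, the partial sums are bounded and solve
the Riccati equation up to an error `O(|y|^(N+1))`. -/
theorem exists_residual_bound (N : ℕ) (a b : ℝ) :
    ∃ K : ℝ, 0 ≤ K ∧ ∀ x ∈ Set.Icc a b, ∀ y ∈ Set.Icc (-1 : ℝ) 1,
      |partialSum N y x| ≤ K ∧
      |partialSum N y x - x - y * partialSum' N y x - y ^ 2 * partialSum N y x ^ 2|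
        ≤ K * |y| ^ (N + 1) := by
  obtain ⟨Q, hQ⟩ := X_pow_dvd_residual N
  have hc : IsCompact (Set.Icc a b ×ˢ Set.Icc (-1 : ℝ) 1) := isCompact_Icc.prod isCompact_Icc
  obtain ⟨K₁, hK₁⟩ := hc.exists_bound_of_continuousOn (continuous_evalEval Q).continuousOn
  obtain ⟨K₂, hK₂⟩ := hc.exists_bound_of_continuousOn (continuous_evalEval (truncA N)).continuousOn
  have e1 (x y : ℝ) : (truncA N).evalEval x y = partialSum N y x := by
    simp [evalEval, truncA, partialSum, eval_finsetSum]
  have e2 (x y : ℝ) : (truncA' N).evalEval x y = partialSum' N y x := by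
    simp [evalEval, truncA', partialSum', eval_finsetSum]
  refine ⟨max 0 (max K₁ K₂), le_max_left _ _, fun x hx y hy => ⟨?_, ?_⟩⟩
  · rw [← e1]
    exact (hK₂ (x, y) ⟨hx, hy⟩).trans ((le_max_right _ _).trans (le_max_right _ _))
  · have h := congrArg (evalEval x y) hQ
    have h' : partialSum N y x - x - y * partialSum' N y x - y ^ 2 * partialSum N y x ^ 2
        = y ^ (N + 1) * Q.evalEval x y := by
      rw [← e1, ← e2]
      simp only [evalEval, eval_sub, eval_mul, eval_pow, eval_X, eval_C] at h ⊢
      rw [← h]; ring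
    rw [h', abs_mul, abs_pow, mul_comm]
    gcongr
    exact (hK₁ (x, y) ⟨hx, hy⟩).trans ((le_max_left _ _).trans (le_max_right _ _))

/-! ### Damped Airy integrals -/

open MeasureTheory in
theorem integrableOn_pow_mul_gaussian {t : ℝ} (ht : 0 < t) (k : ℕ) :
    IntegrableOn (fun s : ℝ => s ^ k * Real.exp (-t * s ^ 2)) (Set.Ioi 0) := by
  have := integrableOn_rpow_mul_exp_neg_mul_sq ht (s := k) (by
    have : (0 : ℝ) ≤ k := k.cast_nonneg
    linarith)
  simpa only [Real.rpow_natCast] using this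

open MeasureTheory in
theorem integrableOn_gaussian_mul_of_abs_le {t : ℝ} (ht : 0 < t) (k : ℕ) {f : ℝ → ℝ}
    (hf : Continuous f) (hb : ∀ s, |f s| ≤ 1) :
    IntegrableOn (fun s : ℝ => s ^ k * Real.exp (-t * s ^ 2) * f s) (Set.Ioi 0) :=
  (integrableOn_pow_mul_gaussian ht k).mul_bdd (c := 1) hf.aestronglyMeasurable
    (Filter.Eventually.of_forall hb)

/-- The damped moment `∫₀^∞ s^k exp(-t s²) cos(s³/3 - x s) ds`. For `k = 0` and `t > 0` it is, up
to an explicit exponential factor, `Ai (t² - x)`. -/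
noncomputable def airyCos (k : ℕ) (t x : ℝ) : ℝ :=
  ∫ s in Set.Ioi (0 : ℝ), s ^ k * Real.exp (-t * s ^ 2) * Real.cos (s ^ 3 / 3 - x * s)

/-- The damped moment `∫₀^∞ s^k exp(-t s²) sin(s³/3 - x s) ds`. -/
noncomputable def airySin (k : ℕ) (t x : ℝ) : ℝ :=
  ∫ s in Set.Ioi (0 : ℝ), s ^ k * Real.exp (-t * s ^ 2) * Real.sin (s ^ 3 / 3 - x * s)

open MeasureTheory in
/-- Differentiation in `x` under the integral sign: the Gaussian factor dominates every moment. -/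
theorem hasDerivAt_gaussian_phase {t : ℝ} (ht : 0 < t) (k : ℕ) {f f' : ℝ → ℝ}
    (hf : ∀ s, HasDerivAt f (f' s) s) (hc : Continuous f')
    (hb : ∀ s, |f s| ≤ 1) (hb' : ∀ s, |f' s| ≤ 1) (x : ℝ) :
    HasDerivAt
      (fun x => ∫ s in Set.Ioi (0 : ℝ), s ^ k * Real.exp (-t * s ^ 2) * f (s ^ 3 / 3 - x * s))
      (-∫ s in Set.Ioi (0 : ℝ),
        s ^ (k + 1) * Real.exp (-t * s ^ 2) * f' (s ^ 3 / 3 - x * s)) x := by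
  have hcf : Continuous f := continuous_iff_continuousAt.2 fun s => (hf s).continuousAt
  rw [← integral_neg]
  refine (hasDerivAt_integral_of_dominated_loc_of_deriv_le (𝕜 := ℝ) (E := ℝ)
    (μ := volume.restrict (Set.Ioi (0 : ℝ))) (s := Set.univ)
    (F := fun y s => s ^ k * Real.exp (-t * s ^ 2) * f (s ^ 3 / 3 - y * s))
    (F' := fun y s => -(s ^ (k + 1) * Real.exp (-t * s ^ 2) * f' (s ^ 3 / 3 - y * s)))
    (bound := fun s => s ^ (k + 1) * Real.exp (-t * s ^ 2))
    Filter.univ_mem ?_ ?_ ?_ ?_ (integrableOn_pow_mul_gaussian ht (k + 1)) ?_).2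
  · exact Filter.Eventually.of_forall fun y => Continuous.aestronglyMeasurable (by fun_prop)
  · exact integrableOn_gaussian_mul_of_abs_le ht k (by fun_prop) fun s => hb _
  · exact Continuous.aestronglyMeasurable (by fun_prop)
  · filter_upwards [ae_restrict_mem measurableSet_Ioi] with s hs y _
    have hs' : (0 : ℝ) < s := hs
    rw [norm_neg, norm_mul, Real.norm_of_nonneg (by positivity)]
    exact mul_le_of_le_one_right (by positivity) (hb' _)
  · filter_upwards with s y _
    have h1 : HasDerivAt (fun y => s ^ 3 / 3 - y * s) (-(1 * s)) y :=
      ((hasDerivAt_id y).mul_const s).const_sub _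
    exact (((hf (s ^ 3 / 3 - y * s)).comp y h1).const_mul
      (s ^ k * Real.exp (-t * s ^ 2))).congr_deriv (by ring)

theorem hasDerivAt_airyCos {t : ℝ} (ht : 0 < t) (k : ℕ) (x : ℝ) :
    HasDerivAt (airyCos k t) (airySin (k + 1) t x) x := by
  have := hasDerivAt_gaussian_phase ht k (f := Real.cos) (f' := fun s => -Real.sin s)
    Real.hasDerivAt_cos (by fun_prop) Real.abs_cos_le_one
    (fun s => by simpa using Real.abs_sin_le_one s) x
  simp only [mul_neg, MeasureTheory.integral_neg, neg_neg] at this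
  exact this

theorem hasDerivAt_airySin {t : ℝ} (ht : 0 < t) (k : ℕ) (x : ℝ) :
    HasDerivAt (airySin k t) (-airyCos (k + 1) t x) x :=
  hasDerivAt_gaussian_phase ht k (f := Real.sin) (f' := Real.cos)
    Real.hasDerivAt_sin (by fun_prop) Real.abs_sin_le_one Real.abs_cos_le_one x

open MeasureTheory in
/-- Airy's equation for the damped integrals, obtained by integrating the derivative of
`exp(-t s²) sin(s³/3 - x s)` over `(0, ∞)`. With `G = airyCos 0 t` it says
`G'' + 2t G' + x G = 0`. -/
theorem airyCos_two {t : ℝ} (ht : 0 < t) (x : ℝ) :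
    airyCos 2 t x = x * airyCos 0 t x + 2 * t * airySin 1 t x := by
  have i2 := integrableOn_gaussian_mul_of_abs_le ht 2
    (f := fun s => Real.cos (s ^ 3 / 3 - x * s)) (by fun_prop) fun s => Real.abs_cos_le_one _
  have i0 := integrableOn_gaussian_mul_of_abs_le ht 0
    (f := fun s => Real.cos (s ^ 3 / 3 - x * s)) (by fun_prop) fun s => Real.abs_cos_le_one _
  have i1 := integrableOn_gaussian_mul_of_abs_le ht 1
    (f := fun s => Real.sin (s ^ 3 / 3 - x * s)) (by fun_prop) fun s => Real.abs_sin_le_one _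
  have key := integral_Ioi_of_hasDerivAt_of_tendsto (a := 0) (m := 0)
    (f := fun s : ℝ => Real.exp (-t * s ^ 2) * Real.sin (s ^ 3 / 3 - x * s))
    (f' := fun s : ℝ => s ^ 2 * Real.exp (-t * s ^ 2) * Real.cos (s ^ 3 / 3 - x * s)
      - x * (s ^ 0 * Real.exp (-t * s ^ 2) * Real.cos (s ^ 3 / 3 - x * s))
      - 2 * t * (s ^ 1 * Real.exp (-t * s ^ 2) * Real.sin (s ^ 3 / 3 - x * s)))
    (Continuous.continuousWithinAt (by fun_prop)) ?_
    ((i2.sub (i0.const_mul x)).sub (i1.const_mul (2 * t))) ?_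
  · have e1 := integral_sub (i2.sub (i0.const_mul x)) (i1.const_mul (2 * t))
    have e2 := integral_sub i2 (i0.const_mul x)
    simp only [Pi.sub_apply] at e1
    rw [e1, e2, integral_const_mul, integral_const_mul] at key
    simp only [airyCos, airySin]
    norm_num at key ⊢
    linarith
  · intro s _
    have h1 : HasDerivAt (fun s : ℝ => Real.exp (-t * s ^ 2))
        (Real.exp (-t * s ^ 2) * (-t * (2 * s))) s := by
      simpa using ((hasDerivAt_pow 2 s).const_mul (-t)).exp
    have h2 : HasDerivAt (fun s : ℝ => s ^ 3 / 3 - x * s) (s ^ 2 - x) s := by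
      exact (((hasDerivAt_pow 3 s).div_const 3).sub ((hasDerivAt_id s).const_mul x)).congr_deriv
        (by norm_num)
    exact (h1.mul h2.sin).congr_deriv (by ring)
  · have h0 : Filter.Tendsto (fun s : ℝ => Real.exp (-t * s ^ 2)) Filter.atTop (nhds 0) := by
      refine Real.tendsto_exp_atBot.comp ?_
      exact (Filter.tendsto_pow_atTop two_ne_zero).const_mul_atTop_of_neg (by linarith)
    refine squeeze_zero_norm (fun s => ?_) h0
    rw [norm_mul, Real.norm_of_nonneg (Real.exp_pos _).le]
    exact mul_le_of_le_one_right (Real.exp_pos _).le (Real.abs_sin_le_one _)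

open MeasureTheory in
/-- A crude bound, uniform in `x` and in `t ≥ 1`; the decay in `t` is not needed. -/
theorem abs_airySin_one_le {t : ℝ} (ht : 1 ≤ t) (x : ℝ) :
    |airySin 1 t x| ≤ ∫ s in Set.Ioi (0 : ℝ), s ^ 1 * Real.exp (-1 * s ^ 2) := by
  rw [← Real.norm_eq_abs]
  refine norm_integral_le_of_norm_le (μ := volume.restrict (Set.Ioi (0 : ℝ)))
    (integrableOn_pow_mul_gaussian one_pos 1) ?_
  filter_upwards [ae_restrict_mem measurableSet_Ioi] with s hs
  have hs' : (0 : ℝ) < s := hs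
  rw [norm_mul, Real.norm_of_nonneg (by positivity)]
  refine (mul_le_of_le_one_right (by positivity) (Real.abs_sin_le_one _)).trans ?_
  gcongr

open MeasureTheory in
/-- For large `t`, `airyCos 0 t x` is at least of the order `t^(-1/2)`, uniformly for bounded `x`.
The Gaussian confines `s` to the scale `t^(-1/2)`, where the phase `s³/3 - x s` is small and
`cos φ ≥ 1 - φ²/2` gives the bound. -/
theorem airyCos_zero_lower (M : ℝ) :
    ∃ T : ℝ, 1 ≤ T ∧ ∀ t ≥ T, ∀ x, |x| ≤ M → (4 * √t)⁻¹ ≤ airyCos 0 t x := by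
  have hM0 : 0 ≤ 6 + 2 * M ^ 2 := by positivity
  refine ⟨4 * (6 + 2 * M ^ 2), by nlinarith [sq_nonneg M], fun t ht x hx => ?_⟩
  have ht1 : 1 ≤ t := by nlinarith [sq_nonneg M]
  have ht0 : 0 < t := by linarith
  set K := 6 + 2 * M ^ 2 with hK
  have hxM : x ^ 2 ≤ M ^ 2 := sq_le_sq' (by linarith [neg_abs_le x]) ((le_abs_self x).trans hx)
  have j1 := integrableOn_pow_mul_gaussian ht0 0
  have j2 := integrableOn_pow_mul_gaussian (half_pos ht0) 0
  have hle : (∫ s in Set.Ioi (0 : ℝ), (s ^ 0 * Real.exp (-t * s ^ 2)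
        - K / t * (s ^ 0 * Real.exp (-(t / 2) * s ^ 2)))) ≤ airyCos 0 t x := by
    refine integral_mono (j1.sub (j2.const_mul _))
      (integrableOn_gaussian_mul_of_abs_le ht0 0 (by fun_prop) fun s => Real.abs_cos_le_one _)
      fun s => ?_
    -- Half of the Gaussian weight absorbs the powers of `s` in the squared phase.
    set y := t / 2 * s ^ 2 with hy
    have hy0 : 0 ≤ y := by positivity
    have e1 : s ^ 2 = 2 * y / t := by rw [hy]; field_simp
    have hs6 : (s ^ 3) ^ 2 = (2 * y / t) ^ 3 := by rw [← e1]; ring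
    have p1 : y ≤ Real.exp y := by linarith [Real.add_one_le_exp y]
    have p3 : y ^ 3 ≤ 6 * Real.exp y := by
      have := Real.pow_div_factorial_le_exp y hy0 3
      norm_num [Nat.factorial] at this
      linarith
    have hphi : (s ^ 3 / 3 - x * s) ^ 2 / 2 ≤ K / t * Real.exp y := by
      have a1 : (s ^ 3 / 3 - x * s) ^ 2 / 2 ≤ (s ^ 3) ^ 2 / 9 + x ^ 2 * s ^ 2 := by
        nlinarith [sq_nonneg (s ^ 3 / 3 + x * s)]
      have a2 : (s ^ 3) ^ 2 / 9 ≤ 6 / t * Real.exp y := by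
        rw [hs6]
        have : (2 * y / t) ^ 3 / 9 = 8 / 9 * y ^ 3 * (1 / t ^ 3) := by field_simp; ring
        rw [this]
        have b1 : 1 / t ^ 3 ≤ 1 / t := by
          apply one_div_le_one_div_of_le ht0
          nlinarith [sq_nonneg t, mul_pos ht0 ht0]
        calc 8 / 9 * y ^ 3 * (1 / t ^ 3) ≤ 8 / 9 * (6 * Real.exp y) * (1 / t) := by gcongr
          _ = 8 / 9 * (6 / t * Real.exp y) := by ring
          _ ≤ 6 / t * Real.exp y := by
            have : 0 ≤ 6 / t * Real.exp y := by positivity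
            linarith
      have a3 : x ^ 2 * s ^ 2 ≤ 2 * M ^ 2 / t * Real.exp y := by
        rw [e1]
        calc x ^ 2 * (2 * y / t) ≤ M ^ 2 * (2 * Real.exp y / t) := by gcongr
          _ = _ := by ring
      calc _ ≤ 6 / t * Real.exp y + 2 * M ^ 2 / t * Real.exp y := by linarith
        _ = _ := by rw [hK]; ring
    have hcos := Real.one_sub_sq_div_two_le_cos (x := s ^ 3 / 3 - x * s)
    have hexp : Real.exp (-t * s ^ 2) = Real.exp (-y) * Real.exp (-y) := by
      rw [← Real.exp_add]; congr 1; rw [hy]; ring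
    have hexp' : Real.exp (-(t / 2) * s ^ 2) = Real.exp (-y) := by
      congr 1; rw [hy]; ring
    have hinv : Real.exp (-y) * Real.exp y = 1 := by rw [← Real.exp_add]; simp
    have hpos := Real.exp_pos (-y)
    simp only [hexp, hexp', pow_zero, one_mul]
    have h5 : 1 - K / t * Real.exp y ≤ Real.cos (s ^ 3 / 3 - x * s) := by linarith
    calc Real.exp (-y) * Real.exp (-y) - K / t * Real.exp (-y)
        = Real.exp (-y) * Real.exp (-y)
          - K / t * Real.exp (-y) * (Real.exp (-y) * Real.exp y) := by rw [hinv, mul_one]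
      _ = Real.exp (-y) * Real.exp (-y) * (1 - K / t * Real.exp y) := by ring
      _ ≤ _ := by gcongr
  rw [integral_sub j1 (j2.const_mul _), integral_const_mul] at hle
  simp only [pow_zero, one_mul, integral_gaussian_Ioi] at hle
  have hsq : √(Real.pi / (t / 2)) ≤ 2 * √(Real.pi / t) := by
    rw [show (2 : ℝ) * √(Real.pi / t) = √(4 * (Real.pi / t)) by
      rw [Real.sqrt_mul (by norm_num), show (4 : ℝ) = 2 ^ 2 by norm_num,
        Real.sqrt_sq (by norm_num)]]
    apply Real.sqrt_le_sqrt
    have : 0 ≤ Real.pi / t := by positivity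
    rw [show Real.pi / (t / 2) = 2 * (Real.pi / t) by field_simp]
    linarith
  have hKt : K / t ≤ 1 / 4 := by
    rw [div_le_iff₀ ht0]; linarith
  have hpi : 1 / √t ≤ √(Real.pi / t) := by
    rw [Real.sqrt_div Real.pi_pos.le]
    gcongr
    rw [Real.one_le_sqrt]
    linarith [Real.pi_gt_three]
  have h6 : K / t * (√(Real.pi / (t / 2)) / 2) ≤ 1 / 4 * √(Real.pi / t) := by
    have : √(Real.pi / (t / 2)) / 2 ≤ √(Real.pi / t) := by linarith
    exact mul_le_mul hKt this (by positivity) (by norm_num)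
  have h7 : (4 * √t)⁻¹ = 1 / 4 * (1 / √t) := by field_simp
  rw [h7]
  linarith

/-! ### The contour shift -/

/-- The entire function `exp(i(w³/3 + z w))`, whose real part on the real axis is the Airy
integrand. -/
noncomputable def airyPhase (z : ℝ) (w : ℂ) : ℂ :=
  Complex.exp (Complex.I * (w ^ 3 / 3 + z * w))

theorem airyPhase_add_mul_I (z s c : ℝ) :
    airyPhase z (s + c * Complex.I)
      = ↑(Real.exp (c ^ 3 / 3 - z * c - c * s ^ 2))
        * Complex.exp (((s ^ 3 / 3 + (z - c ^ 2) * s : ℝ) : ℂ) * Complex.I) := by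
  rw [airyPhase, Complex.ofReal_exp, ← Complex.exp_add]
  congr 1
  push_cast
  have h2 : Complex.I ^ 2 = -1 := Complex.I_sq
  have h3 : Complex.I ^ 3 = -Complex.I := by rw [pow_succ, h2]; ring
  have h4 : Complex.I ^ 4 = 1 := by rw [show 4 = 2 * 2 by rfl, pow_mul, h2]; norm_num
  ring_nf
  rw [h2, h3, h4]
  ring

theorem re_airyPhase (z s c : ℝ) :
    (airyPhase z (s + c * Complex.I)).re
      = Real.exp (c ^ 3 / 3 - z * c - c * s ^ 2) * Real.cos (s ^ 3 / 3 + (z - c ^ 2) * s) := by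
  rw [airyPhase_add_mul_I, Complex.re_ofReal_mul, Complex.exp_ofReal_mul_I_re]

theorem norm_airyPhase (z s c : ℝ) :
    ‖airyPhase z (s + c * Complex.I)‖ = Real.exp (c ^ 3 / 3 - z * c - c * s ^ 2) := by
  rw [airyPhase_add_mul_I, norm_mul, Complex.norm_exp_ofReal_mul_I, mul_one, Complex.norm_real,
    Real.norm_of_nonneg (Real.exp_pos _).le]

theorem continuous_airyPhase (z : ℝ) : Continuous (airyPhase z) := by
  unfold airyPhase; fun_prop

theorem intervalIntegral_re (f : ℝ → ℂ) (hf : Continuous f) (a b : ℝ) :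
    (∫ s in a..b, f s).re = ∫ s in a..b, (f s).re :=
  (Complex.reCLM.intervalIntegral_comp_comm (hf.intervalIntegrable a b)).symm

/-- The vertical side of the rectangle `[0, R] × [0, c]` at abscissa `R` contributes nothing in
the limit `R → ∞`. -/
theorem tendsto_side (z c : ℝ) (hc : 0 < c) :
    Filter.Tendsto (fun R : ℝ => ∫ y in (0 : ℝ)..c, airyPhase z (R + y * Complex.I))
      Filter.atTop (nhds 0) := by
  have hcont (R : ℝ) : Continuous fun y : ℝ => airyPhase z (R + y * Complex.I) :=
    (continuous_airyPhase z).comp (by fun_prop)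
  have := intervalIntegral.tendsto_integral_filter_of_dominated_convergence
    (μ := MeasureTheory.volume) (a := 0) (b := c) (l := Filter.atTop)
    (F := fun (R y : ℝ) => airyPhase z (R + y * Complex.I)) (f := fun _ => 0)
    (fun y => Real.exp (y ^ 3 / 3 - z * y))
    (Filter.Eventually.of_forall fun R => (hcont R).aestronglyMeasurable) ?_
    (Continuous.intervalIntegrable (by fun_prop) _ _) ?_
  · simpa using this
  · refine Filter.Eventually.of_forall fun R => Filter.Eventually.of_forall fun y hy => ?_
    rw [Set.uIoc_of_le hc.le] at hy
    rw [norm_airyPhase]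
    have : 0 ≤ y * R ^ 2 := mul_nonneg hy.1.le (sq_nonneg R)
    exact Real.exp_le_exp.2 (by linarith)
  · refine Filter.Eventually.of_forall fun y hy => ?_
    rw [Set.uIoc_of_le hc.le] at hy
    rw [tendsto_zero_iff_norm_tendsto_zero]
    simp only [norm_airyPhase]
    refine Real.tendsto_exp_atBot.comp ?_
    exact Filter.tendsto_atBot_add_const_left _ _
      (Filter.tendsto_neg_atTop_atBot.comp
        ((Filter.tendsto_pow_atTop two_ne_zero).const_mul_atTop hy.1))

/-- Cauchy's theorem on the rectangle with corners `0` and `R + ic`, in real parts. The side on the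
imaginary axis drops out, because `airyPhase z (iy)` is real and is multiplied by `dw = i dy`. -/
theorem contour_identity (z c R : ℝ) :
    ∫ s in (0 : ℝ)..R, Real.cos (s ^ 3 / 3 + z * s)
      = (∫ s in (0 : ℝ)..R, Real.exp (c ^ 3 / 3 - z * c)
          * (s ^ 0 * Real.exp (-c * s ^ 2) * Real.cos (s ^ 3 / 3 - (c ^ 2 - z) * s)))
        - (Complex.I * ∫ y in (0 : ℝ)..c, airyPhase z (R + y * Complex.I)).re := by
  have hd : Differentiable ℂ (airyPhase z) := by unfold airyPhase; fun_prop
  have h := Complex.integral_boundary_rect_eq_zero_of_differentiableOn (airyPhase z) 0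
    (R + c * Complex.I) hd.differentiableOn
  have hcont (d : ℝ) : Continuous fun s : ℝ => airyPhase z (s + d * Complex.I) :=
    (continuous_airyPhase z).comp (by fun_prop)
  have hcont' (d : ℝ) : Continuous fun y : ℝ => airyPhase z (d + y * Complex.I) :=
    (continuous_airyPhase z).comp (by fun_prop)
  simp only [Complex.zero_re, Complex.zero_im, Complex.add_re, Complex.add_im, Complex.ofReal_re,
    Complex.ofReal_im, Complex.mul_re, Complex.mul_im, Complex.I_re, Complex.I_im, mul_zero,
    mul_one, add_zero, zero_add, smul_eq_mul, sub_self] at h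
  have h' := congrArg Complex.re h
  rw [Complex.sub_re, Complex.add_re, Complex.sub_re, intervalIntegral_re _ (hcont 0),
    intervalIntegral_re _ (hcont c), Complex.zero_re] at h'
  have him : (Complex.I * ∫ y in (0 : ℝ)..c, airyPhase z ((0 : ℝ) + y * Complex.I)).re = 0 := by
    have : ∀ y : ℝ, airyPhase z ((0 : ℝ) + y * Complex.I)
        = ((Real.exp (y ^ 3 / 3 - z * y) : ℝ) : ℂ) := by
      intro y
      rw [airyPhase_add_mul_I]
      simp
    simp only [this]
    rw [intervalIntegral.integral_ofReal]
    simp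
  rw [him] at h'
  simp only [re_airyPhase] at h'
  have e0 : ∀ s : ℝ, Real.exp (0 ^ 3 / 3 - z * 0 - 0 * s ^ 2)
      * Real.cos (s ^ 3 / 3 + (z - 0 ^ 2) * s) = Real.cos (s ^ 3 / 3 + z * s) := by
    intro s; simp
  have ec : ∀ s : ℝ, Real.exp (c ^ 3 / 3 - z * c - c * s ^ 2)
      * Real.cos (s ^ 3 / 3 + (z - c ^ 2) * s) = Real.exp (c ^ 3 / 3 - z * c)
          * (s ^ 0 * Real.exp (-c * s ^ 2) * Real.cos (s ^ 3 / 3 - (c ^ 2 - z) * s)) := by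
    intro s
    rw [sub_eq_add_neg (c ^ 3 / 3 - z * c) (c * s ^ 2), Real.exp_add,
      show s ^ 3 / 3 + (z - c ^ 2) * s = s ^ 3 / 3 - (c ^ 2 - z) * s by ring,
      show -c * s ^ 2 = -(c * s ^ 2) by ring]
    ring
  simp only [e0, ec] at h'
  linarith

/-- Shifting the contour to height `c` turns the conditionally convergent integral into an
absolutely convergent one, for every `c > 0`. The choice `z = t² - x`, `c = t` makes the new phase
`s³/3 - x s` independent of `t`. -/
theorem airy_eq {Ai : ℝ → ℝ}
    (hAi : ∀ z : ℝ, Filter.Tendsto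
      (fun R : ℝ => ∫ s in (0:ℝ)..R, Real.cos (s ^ 3 / 3 + z * s))
      Filter.atTop (nhds (Real.pi * Ai z))) {c : ℝ} (hc : 0 < c) (z : ℝ) :
    Real.pi * Ai z = Real.exp (c ^ 3 / 3 - z * c) * airyCos 0 c (c ^ 2 - z) := by
  refine tendsto_nhds_unique (hAi z) ?_
  simp only [contour_identity z c]
  have h1 := MeasureTheory.intervalIntegral_tendsto_integral_Ioi (0 : ℝ)
    ((integrableOn_gaussian_mul_of_abs_le hc 0
      (f := fun s => Real.cos (s ^ 3 / 3 - (c ^ 2 - z) * s)) (by fun_prop)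
      fun s => Real.abs_cos_le_one _).const_mul (Real.exp (c ^ 3 / 3 - z * c))) Filter.tendsto_id
  have h2 := (Complex.continuous_re.tendsto _).comp
    ((tendsto_side z c hc).const_mul Complex.I)
  have h3 := h1.sub h2
  rw [MeasureTheory.integral_const_mul] at h3
  simpa [airyCos] using h3

/-! ### The Riccati equation for the logarithmic derivative and the comparison -/

/-- The derivative of `Ai`, with the height `t` of the shifted contour held fixed while `z`
varies. -/
theorem deriv_airy {Ai : ℝ → ℝ}
    (hAi : ∀ z : ℝ, Filter.Tendsto
      (fun R : ℝ => ∫ s in (0:ℝ)..R, Real.cos (s ^ 3 / 3 + z * s))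
      Filter.atTop (nhds (Real.pi * Ai z))) {t : ℝ} (ht : 0 < t) (z : ℝ) :
    deriv Ai z = -(Real.pi⁻¹ * Real.exp (t ^ 3 / 3 - z * t)) *
      (t * airyCos 0 t (t ^ 2 - z) + airySin 1 t (t ^ 2 - z)) := by
  have hAi' : Ai = fun z => Real.pi⁻¹ *
      (Real.exp (t ^ 3 / 3 - z * t) * airyCos 0 t (t ^ 2 - z)) := by
    funext z
    rw [← airy_eq hAi ht z, inv_mul_cancel_left₀ Real.pi_ne_zero]
  have h1 : HasDerivAt (fun z => t ^ 3 / 3 - z * t) (-(1 * t)) z :=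
    ((hasDerivAt_id z).mul_const t).const_sub _
  have h2 : HasDerivAt (fun z => airyCos 0 t (t ^ 2 - z)) (airySin 1 t (t ^ 2 - z) * (-1)) z :=
    (hasDerivAt_airyCos ht 0 (t ^ 2 - z)).comp z ((hasDerivAt_id z).const_sub _)
  rw [hAi']
  exact (((h1.exp.mul h2).const_mul Real.pi⁻¹).congr_deriv (by ring)).deriv

/-- The function `u = ∂/∂t log θ(x, t)` of the theorem, expressed as `-2t G'/G` with
`G = airyCos 0 t` and `G' = airySin 1 t` its derivative in `x`. -/
noncomputable def airyU (t x : ℝ) : ℝ := -2 * t * airySin 1 t x / airyCos 0 t x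

/-- At fixed `t`, `u` satisfies in `x` the Riccati equation `u = x + y u' + y² u²`, `y = (-2t)⁻¹`,
the same one as the generating function of the `a_n`. -/
theorem hasDerivAt_airyU {t x : ℝ} (ht : 0 < t) (h : airyCos 0 t x ≠ 0) :
    HasDerivAt (airyU t) (-2 * t * (airyU t x - x - airyU t x ^ 2 / (4 * t ^ 2))) x := by
  have h1 := ((hasDerivAt_airySin ht 1 x).const_mul (-2 * t)).div (hasDerivAt_airyCos ht 0 x) h
  refine h1.congr_deriv ?_
  rw [airyCos_two ht, airyU]
  field_simp
  ring

/-- Energy estimate for `w' = -2t (q w + E)` on an interval of length one with damping `q ≥ 1/2`: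
the initial value is forgotten at the rate `exp(-t)`, and what remains is the size of the
forcing. -/
theorem sq_le_of_damped {w q E : ℝ → ℝ} {t ε x : ℝ} (ht : 0 < t)
    (hw : ∀ ξ ∈ Set.Icc (x - 1) x, HasDerivAt w (-2 * t * (w ξ * q ξ + E ξ)) ξ)
    (hq : ∀ ξ ∈ Set.Icc (x - 1) x, 1 / 2 ≤ q ξ)
    (hE : ∀ ξ ∈ Set.Icc (x - 1) x, |E ξ| ≤ ε) :
    w x ^ 2 ≤ Real.exp (-t) * w (x - 1) ^ 2 + 4 * ε ^ 2 := by
  have hd : ∀ ξ ∈ Set.Icc (x - 1) x,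
      HasDerivAt (fun ξ => Real.exp (t * ξ) * (w ξ ^ 2 - 4 * ε ^ 2))
        (t * Real.exp (t * ξ) *
          (w ξ ^ 2 - 4 * ε ^ 2 - 4 * q ξ * w ξ ^ 2 - 4 * w ξ * E ξ)) ξ := by
    intro ξ hξ
    have h1 : HasDerivAt (fun ξ => Real.exp (t * ξ)) (Real.exp (t * ξ) * (t * 1)) ξ :=
      ((hasDerivAt_id ξ).const_mul t).exp
    exact (h1.mul (((hw ξ hξ).pow 2).sub_const (4 * ε ^ 2))).congr_deriv (by
      simp only [Pi.pow_apply]; push_cast; ring)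
  have hanti : AntitoneOn (fun ξ => Real.exp (t * ξ) * (w ξ ^ 2 - 4 * ε ^ 2))
      (Set.Icc (x - 1) x) := by
    refine antitoneOn_of_deriv_nonpos (convex_Icc _ _)
      (fun ξ hξ => (hd ξ hξ).continuousAt.continuousWithinAt)
      (fun ξ hξ => (hd ξ (interior_subset hξ)).differentiableAt.differentiableWithinAt)
      fun ξ hξ => ?_
    have hξ' := interior_subset hξ
    rw [(hd ξ hξ').deriv]
    refine mul_nonpos_of_nonneg_of_nonpos (by positivity) ?_
    have a1 : w ξ ^ 2 ≤ 2 * q ξ * w ξ ^ 2 := by nlinarith [hq ξ hξ', sq_nonneg (w ξ)]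
    have a2 : E ξ ^ 2 ≤ ε ^ 2 := by
      rw [← sq_abs (E ξ)]
      exact pow_le_pow_left₀ (abs_nonneg _) (hE ξ hξ') 2
    nlinarith [sq_nonneg (w ξ + 2 * E ξ)]
  have h := hanti ⟨le_rfl, by linarith⟩ ⟨by linarith, le_rfl⟩ (show x - 1 ≤ x by linarith)
  have hexp : Real.exp (t * (x - 1)) = Real.exp (t * x) * Real.exp (-t) := by
    rw [← Real.exp_add]; congr 1; ring
  simp only [hexp, mul_assoc] at h
  have h' := le_of_mul_le_mul_left h (Real.exp_pos _)
  nlinarith [Real.exp_pos (-t), sq_nonneg ε, mul_nonneg (Real.exp_pos (-t)).le (sq_nonneg ε)]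

/-- An a priori bound on `u`, uniform on `[x - 1, x]`. The exponent `2` is far from sharp, but is
what keeps the damping coefficient `1 - (u + S)/(4t²)` at least `1/2`. -/
theorem airyU_bound (x : ℝ) :
    ∃ T : ℝ, 1 ≤ T ∧ ∀ t ≥ T, ∀ ξ ∈ Set.Icc (x - 1) x,
      0 < airyCos 0 t ξ ∧ |airyU t ξ| ≤ t ^ 2 := by
  obtain ⟨T, hT1, hT⟩ := airyCos_zero_lower (|x| + 1)
  set D := ∫ s in Set.Ioi (0 : ℝ), s ^ 1 * Real.exp (-1 * s ^ 2) with hD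
  refine ⟨max T ((8 * D) ^ 2), hT1.trans (le_max_left _ _), fun t ht ξ hξ => ?_⟩
  have htT : T ≤ t := (le_max_left _ _).trans ht
  have ht1 : 1 ≤ t := hT1.trans htT
  have ht0 : 0 < t := by linarith
  have hξ' : |ξ| ≤ |x| + 1 := by
    rw [abs_le]
    constructor
    · linarith [hξ.1, neg_abs_le x]
    · linarith [hξ.2, le_abs_self x]
  have hG := hT t htT ξ hξ'
  have hs : 0 < √t := Real.sqrt_pos.2 ht0
  have hG0 : 0 < airyCos 0 t ξ := lt_of_lt_of_le (by positivity) hG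
  refine ⟨hG0, ?_⟩
  have hH : |airySin 1 t ξ| ≤ D := abs_airySin_one_le ht1 ξ
  have h8 : 8 * D ≤ √t := Real.le_sqrt_of_sq_le ((le_max_right _ _).trans ht)
  have htt : √t * √t = t := Real.mul_self_sqrt ht0.le
  rw [airyU, abs_div, abs_mul, abs_mul, abs_of_pos hG0, abs_of_pos ht0, abs_neg, abs_two,
    div_le_iff₀ hG0]
  have h9 : t ^ 2 * (4 * √t)⁻¹ = t * √t / 4 := by
    field_simp
    nlinarith
  calc 2 * t * |airySin 1 t ξ| ≤ 2 * t * D := by gcongr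
    _ ≤ t * √t / 4 := by nlinarith
    _ = t ^ 2 * (4 * √t)⁻¹ := h9.symm
    _ ≤ _ := by gcongr

/-- The asymptotic estimate for `airyU`, by comparing it with the partial sum on `[x - 1, x]`. -/
theorem eventually_abs_sub_le (x : ℝ) (N : ℕ) :
    ∃ B : ℝ, ∀ᶠ t : ℝ in Filter.atTop,
      |airyU t x - partialSum N (-2 * t)⁻¹ x| ≤ B * (t ^ (N + 1))⁻¹ := by
  obtain ⟨T, hT1, hT⟩ := airyU_bound x
  obtain ⟨K, hK0, hK⟩ := exists_residual_bound N (x - 1) x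
  -- One `4` comes from the initial value at `x - 1`, the other from the energy estimate.
  refine ⟨√(4 + 4 * K ^ 2), ?_⟩
  have hexp := (Real.tendsto_pow_mul_exp_neg_atTop_nhds_zero (4 + 2 * (N + 1))).eventually_le_const
    zero_lt_one
  filter_upwards [Filter.eventually_ge_atTop T, Filter.eventually_ge_atTop K, hexp]
    with t htT htK hexp
  have ht1 : 1 ≤ t := hT1.trans htT
  have ht0 : 0 < t := by linarith
  have htsq : t ≤ t ^ 2 := by nlinarith
  set y : ℝ := (-2 * t)⁻¹ with hy
  have hyabs : |y| ≤ t⁻¹ := by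
    rw [hy, abs_inv, abs_mul, abs_neg, abs_two, abs_of_pos ht0]
    gcongr
    linarith
  have hyI : y ∈ Set.Icc (-1 : ℝ) 1 := abs_le.1 (hyabs.trans (inv_le_one_of_one_le₀ ht1))
  have hyt : -2 * t * y = 1 := by rw [hy]; field_simp
  have hyy : y ^ 2 = 1 / (4 * t ^ 2) := by rw [hy]; field_simp; norm_num
  -- Subtracting the exact and the approximate Riccati equations gives a linear equation for
  -- `w = u - S`, since `u² - S² = (u + S) w`.
  have key := sq_le_of_damped (w := fun ξ => airyU t ξ - partialSum N y ξ)
    (q := fun ξ => 1 - (airyU t ξ + partialSum N y ξ) / (4 * t ^ 2))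
    (E := fun ξ => partialSum N y ξ - ξ - y * partialSum' N y ξ - y ^ 2 * partialSum N y ξ ^ 2)
    (ε := K * |y| ^ (N + 1)) (x := x) ht0 ?_ ?_ ?_
  · have hw0 : (airyU t (x - 1) - partialSum N y (x - 1)) ^ 2 ≤ 4 * t ^ 4 := by
      have hm : x - 1 ∈ Set.Icc (x - 1) x := ⟨le_rfl, by linarith⟩
      have a1 := abs_le.1 (hT t htT _ hm).2
      have a2 := abs_le.1 (hK _ hm y hyI).1
      have : (airyU t (x - 1) - partialSum N y (x - 1)) ^ 2 ≤ (2 * t ^ 2) ^ 2 :=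
        sq_le_sq' (by linarith) (by linarith)
      calc _ ≤ _ := this
        _ = _ := by ring
    have hp : 0 < t ^ (N + 1) := by positivity
    have b1 : Real.exp (-t) * (4 * t ^ 4) ≤ 4 * ((t ^ (N + 1))⁻¹) ^ 2 := by
      rw [inv_pow, ← div_eq_mul_inv, le_div_iff₀ (by positivity)]
      calc Real.exp (-t) * (4 * t ^ 4) * (t ^ (N + 1)) ^ 2
          = 4 * (t ^ (4 + 2 * (N + 1)) * Real.exp (-t)) := by ring
        _ ≤ 4 := by linarith
    have b2 : |y| ^ (N + 1) ≤ (t ^ (N + 1))⁻¹ := by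
      rw [← inv_pow]
      exact pow_le_pow_left₀ (abs_nonneg _) hyabs _
    have b3 : (K * |y| ^ (N + 1)) ^ 2 ≤ K ^ 2 * ((t ^ (N + 1))⁻¹) ^ 2 := by
      rw [← mul_pow]
      gcongr
    have b4 : Real.exp (-t) * (airyU t (x - 1) - partialSum N y (x - 1)) ^ 2
        ≤ Real.exp (-t) * (4 * t ^ 4) := by gcongr
    refine abs_le_of_sq_le_sq ?_ (by positivity)
    rw [mul_pow, Real.sq_sqrt (by positivity)]
    linarith
  · intro ξ hξ
    have h1 := hasDerivAt_airyU ht0 (hT t htT ξ hξ).1.ne'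
    refine (h1.sub (hasDerivAt_partialSum N y ξ)).congr_deriv ?_
    have h3 : partialSum' N y ξ = -2 * t * (y * partialSum' N y ξ) := by
      rw [← mul_assoc, hyt, one_mul]
    rw [hyy]
    linear_combination (-1 : ℝ) * h3
  · intro ξ hξ
    have a1 := (abs_le.1 (hT t htT ξ hξ).2).2
    have a2 := (abs_le.1 (hK ξ hξ y hyI).1).2
    have : (airyU t ξ + partialSum N y ξ) / (4 * t ^ 2) ≤ 1 / 2 := by
      rw [div_le_iff₀ (by positivity)]
      linarith
    linarith
  · intro ξ hξ
    exact (hK ξ hξ y hyI).2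

open Filter Asymptotics in
/-- for fixed `x ∈ ℝ` and `N ∈ ℕ`, with `Ai` the Airy function
(defined by `Ai(z) = (1/π)·lim_{R→∞} ∫_0^R cos(s³/3 + z·s) ds`), one has
`Ai(t² − x) ≠ 0` for all sufficiently large real `t`, and the logarithmic
derivative `d/dt log(exp(2t³/3)·Ai(t² − x)) = 2t² + 2t·Ai'(t² − x)/Ai(t² − x)`
satisfies
`2t² + 2t·Ai'(t² − x)/Ai(t² − x) − ∑_{n=0}^{N} a_n(x)·(−2t)^{−n} = O(t^{−(N+1)})`
as `t → +∞`; i.e. `∂/∂t log θ(x,t)` with `θ(x,t) = exp(2t³/3)·Ai(t² − x)` admits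
the asymptotic expansion `∑_{n=0}^{∞} a_n(x)·(−2t)^{−n}`. -/
theorem airy_log_deriv_asymptotic_expansion (x : ℝ) (N : ℕ) (Ai : ℝ → ℝ)
    (hAi : ∀ z : ℝ, Filter.Tendsto
      (fun R : ℝ => ∫ s in (0:ℝ)..R, Real.cos (s ^ 3 / 3 + z * s))
      Filter.atTop (nhds (Real.pi * Ai z))) :
    (∀ᶠ t : ℝ in Filter.atTop, Ai (t ^ 2 - x) ≠ 0) ∧
    (fun t : ℝ => 2 * t ^ 2 + 2 * t * deriv Ai (t ^ 2 - x) / Ai (t ^ 2 - x)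
        - ∑ n ∈ Finset.range (N + 1), Polynomial.eval x (painleveA n) * ((-2 * t) ^ n)⁻¹)
      =O[Filter.atTop] fun t : ℝ => (t ^ (N + 1))⁻¹ := by
  obtain ⟨T, hT1, hT⟩ := airyU_bound x
  obtain ⟨B, hB⟩ := eventually_abs_sub_le x N
  have hxI : x ∈ Set.Icc (x - 1) x := ⟨by linarith, le_rfl⟩
  have hpos : ∀ t ≥ T, 0 < Real.pi * Ai (t ^ 2 - x) := by
    intro t ht
    rw [airy_eq hAi (by linarith : 0 < t), sub_sub_cancel]
    exact mul_pos (Real.exp_pos _) (hT t ht x hxI).1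
  refine ⟨?_, ?_⟩
  · filter_upwards [eventually_ge_atTop T] with t ht h0
    have := hpos t ht
    rw [h0, mul_zero] at this
    exact lt_irrefl _ this
  · refine IsBigO.of_bound B ?_
    filter_upwards [eventually_ge_atTop T, hB] with t ht hBt
    have ht0 : 0 < t := by linarith
    have hG := (hT t ht x hxI).1
    have hA : Ai (t ^ 2 - x) = Real.pi⁻¹ *
        (Real.exp (t ^ 3 / 3 - (t ^ 2 - x) * t) * airyCos 0 t x) := by
      have := airy_eq hAi ht0 (t ^ 2 - x)
      rw [sub_sub_cancel] at this
      rw [← this, inv_mul_cancel_left₀ Real.pi_ne_zero]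
    have hu : 2 * t ^ 2 + 2 * t * deriv Ai (t ^ 2 - x) / Ai (t ^ 2 - x) = airyU t x := by
      rw [deriv_airy hAi ht0, hA, sub_sub_cancel, airyU]
      have := Real.exp_ne_zero (t ^ 3 / 3 - (t ^ 2 - x) * t)
      generalize Real.exp (t ^ 3 / 3 - (t ^ 2 - x) * t) = e at this
      have hG' := hG.ne'
      field_simp
      ring
    have hs : ∑ n ∈ Finset.range (N + 1), Polynomial.eval x (painleveA n) * ((-2 * t) ^ n)⁻¹
        = partialSum N (-2 * t)⁻¹ x := by
      simp only [partialSum, inv_pow]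
    rw [hu, hs, Real.norm_eq_abs, Real.norm_of_nonneg (by positivity)]
    exact hBt
end
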